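/- Let n ≥ N(Y), let b ∈ ℕ with b ≥ s + 2, and let j ∈ H_{10}. Then t_j is differentiable and t_j'(x)·Π(x)·Π(x_j) ≥ 0 for all x ∈ ℝ. -/

import Mathlib

open Real Set MeasureTheory

noncomputable def trigPi (s : ℕ) (y : ℤ → ℝ) (x : ℝ) : ℝ :=
  ∏ i ∈ Finset.range (2 * s), Real.sin ((x - y ((i : ℤ) + 1)) / 2)

noncomputable def xnode (n : ℕ) (j : ℤ) : ℝ := -(j : ℝ) * (Real.pi / n)

noncomputable def jIdx (y : ℤ → ℝ) (n : ℕ) (i : ℤ) : ℤ := ⌈-(y i) * n / Real.pi⌉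

noncomputable def Oint (y : ℤ → ℝ) (n m : ℕ) (i : ℤ) : Set ℝ :=
  Set.Ioo (xnode n (jIdx y n i + m + 1)) (xnode n (jIdx y n i - m))

noncomputable def Oall (y : ℤ → ℝ) (n m : ℕ) : Set ℝ := ⋃ i : ℤ, Oint y n m i

def memH (y : ℤ → ℝ) (n m : ℕ) (j : ℤ) : Prop := xnode n j ∉ Oall y n m

noncomputable def Gam (n : ℕ) (j : ℤ) (x : ℝ) : ℝ :=
  min 1 (1 / (n * |Real.sin ((x - (xnode n j + Real.pi / n / 2)) / 2)|))

noncomputable def Jker (n b : ℕ) (j : ℤ) (x : ℝ) : ℝ :=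
  (Real.sin (n * (x - xnode n j) / 2) / Real.sin ((x - xnode n j) / 2)) ^ (2 * b) +
    (Real.sin (n * (x - xnode n (j - 1)) / 2) / Real.sin ((x - xnode n (j - 1)) / 2)) ^ (2 * b)

noncomputable def tfun (s : ℕ) (y : ℤ → ℝ) (n b : ℕ) (j : ℤ) (x : ℝ) : ℝ :=
  (∫ u in (xnode n j - Real.pi)..x, Jker n b j u * trigPi s y u) /
    (∫ u in (xnode n j - Real.pi)..(xnode n j + Real.pi), Jker n b j u * trigPi s y u)

noncomputable def chiFun (n : ℕ) (j : ℤ) (x : ℝ) : ℝ := if x ≤ xnode n j then 0 else 1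

def IsTrigPoly (m : ℕ) (P : ℝ → ℝ) : Prop :=
  ∃ a b : ℕ → ℝ, ∀ x : ℝ,
    P x = a 0 + ∑ k ∈ Finset.Icc 1 m, (a k * Real.cos (k * x) + b k * Real.sin (k * x))

noncomputable def omegaMod (k : ℕ) (f : ℝ → ℝ) (t : ℝ) : ℝ :=
  sSup {v : ℝ | ∃ δ x : ℝ, 0 < δ ∧ δ ≤ t ∧
    v = |∑ i ∈ Finset.range (k + 1), (-1 : ℝ) ^ (k - i) * (k.choose i : ℝ) * f (x + i * δ)|}

noncomputable def taufun (s : ℕ) (y : ℤ → ℝ) (n b : ℕ) (j : ℤ) (α : ℝ) (x : ℝ) : ℝ :=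
  α * (∫ u in (xnode n j - Real.pi)..x, tfun s y n b (j + 10) u) +
    (1 - α) * (∫ u in (xnode n j - Real.pi)..x, tfun s y n b (j - 10) u)

noncomputable def PsiCap (a ht hh x : ℝ) : ℝ :=
  max (x - a) 0 ^ 3 + 3 * ht * max (x - a) 0 ^ 2 + hh * max (x - a) 0

noncomputable def qPoly (dj h x : ℝ) : ℝ :=
  x ^ 4 / (8 * Real.pi) + ((Real.pi - dj) / (2 * Real.pi)) * x ^ 3 +
    ((5 * dj ^ 2 - 6 * dj * Real.pi - h ^ 2) / (4 * Real.pi)) * x ^ 2 +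
    ((Real.pi - dj) * (5 * dj ^ 2 - 2 * Real.pi ^ 2 - h ^ 2) / (2 * Real.pi)) * x

/-!
The kernel `(sin (n u / 2) / sin (u / 2)) ^ (2 b)` has mass of order `n ^ (2 b - 1)` within
`2 / n` of the origin. If every zero of `Π` is at distance at least `(m - 1) π / n` from `c`, then
each factor of `Π (c + u) / Π c` differs from `1` by at most `n |u| / (2 (m - 1))`. So this ratio
is close to `1` under the peak of the kernel, nonnegative for `|u| ≤ 2 (m - 1) / n`, and beyond
that it grows like a power of `u` which the decay of the kernel outweighs as soon as `s + 1 ≤ b`.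
Hence the integral of the kernel centred at `c` against `Π` has the sign of `Π c`, for `c = x_j`
and for `c = x_{j - 1}`; the two signs agree, so the denominator of `t_j` has the sign of
`Π (x_j)`. As `t_j'` is a nonnegative multiple of `Π` divided by this denominator, the claim
follows.
-/

section SinRatio

/-- The kernel `sin (n u / 2) / sin (u / 2)`, encoded through the Chebyshev polynomial `U_{n - 1}`
in order to fill in its removable singularities. -/
noncomputable def sinRatio (n : ℕ) (u : ℝ) : ℝ :=
  (Polynomial.Chebyshev.U ℝ ((n : ℤ) - 1)).eval (cos (u / 2))

@[fun_prop]
lemma continuous_sinRatio (n : ℕ) : Continuous (sinRatio n) := by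
  unfold sinRatio
  fun_prop

lemma sinRatio_mul_sin (n : ℕ) (u : ℝ) : sinRatio n u * sin (u / 2) = sin (n * u / 2) := by
  rw [sinRatio, Polynomial.Chebyshev.U_real_cos]
  push_cast
  ring_nf

lemma sinRatio_eq_div (n : ℕ) {u : ℝ} (hu : sin (u / 2) ≠ 0) :
    sinRatio n u = sin (n * u / 2) / sin (u / 2) := by
  rw [eq_div_iff hu, sinRatio_mul_sin]

lemma sinRatio_neg (n : ℕ) (u : ℝ) : sinRatio n (-u) = sinRatio n u := by
  rw [sinRatio, neg_div, cos_neg, sinRatio]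

lemma abs_sinRatio_add_two_pi (n : ℕ) (u : ℝ) : |sinRatio n (u + 2 * π)| = |sinRatio n u| := by
  rw [sinRatio, sinRatio, show (u + 2 * π) / 2 = u / 2 + π by ring, cos_add_pi]
  rcases n with _ | n
  · simp
  · rw [show ((n + 1 : ℕ) : ℤ) - 1 = n by push_cast; ring, Polynomial.Chebyshev.U_eval_neg]
    rcases Int.units_eq_one_or (n : ℤ).negOnePow with h | h <;> simp [h]

lemma two_mul_div_pi_le_sinRatio {n : ℕ} {u : ℝ} (hu : 0 < u) (hnu : n * u ≤ 2) (huπ : u ≤ π) :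
    2 * n / π ≤ sinRatio n u := by
  have hsin : 0 < sin (u / 2) := sin_pos_of_pos_of_lt_pi (by linarith) (by linarith)
  rw [sinRatio_eq_div n hsin.ne', le_div_iff₀ hsin]
  calc 2 * n / π * sin (u / 2) ≤ 2 * n / π * (u / 2) := by
        gcongr
        exact sin_le (by linarith)
    _ = 2 / π * (n * u / 2) := by ring
    _ ≤ sin (n * u / 2) := mul_le_sin (by positivity) (by linarith [pi_gt_three])

lemma abs_sinRatio_le (n : ℕ) {u : ℝ} (hu : 0 < u) (huπ : u ≤ π) : |sinRatio n u| ≤ π / u := by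
  have hjordan : u / π ≤ sin (u / 2) := by
    convert mul_le_sin (x := u / 2) (by linarith) (by linarith) using 1
    ring
  have hsin : 0 < sin (u / 2) := lt_of_lt_of_le (by positivity) hjordan
  rw [sinRatio_eq_div n hsin.ne', abs_div, abs_of_pos hsin, ← one_div_div u π]
  gcongr
  exact abs_sin_le_one _

end SinRatio

section Concentration

variable {n p k q : ℕ} {ρ : ℝ} {R : ℝ → ℝ}

lemma le_integral_sinRatio_pow_mul_near (hn : 0 < n) (hnρ : 13 ≤ n * ρ) (hρπ : ρ ≤ π)
    (hp : Even p) (hR : Continuous R) (hlow : ∀ u ∈ Icc 0 ρ, (1 - u / ρ) ^ k ≤ R u) :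
    2 / n * ((2 * n / π) ^ p * (11 / 13) ^ k) ≤ ∫ u in (0 : ℝ)..ρ, sinRatio n u ^ p * R u := by
  have hn0 : (0 : ℝ) < n := by exact_mod_cast hn
  have hρ : 0 < ρ := pos_of_mul_pos_right (by linarith) hn0.le
  have hpeak : 2 / n ≤ ρ := by rw [div_le_iff₀ hn0]; linarith
  have hint (a c : ℝ) : IntervalIntegrable (fun u => sinRatio n u ^ p * R u) volume a c :=
    Continuous.intervalIntegrable (by fun_prop) a c
  have hrest : 0 ≤ ∫ u in (2 / n : ℝ)..ρ, sinRatio n u ^ p * R u := by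
    refine intervalIntegral.integral_nonneg hpeak fun u hu => mul_nonneg (hp.pow_nonneg _) ?_
    have hu0 : 0 ≤ u := le_trans (by positivity) hu.1
    exact (pow_nonneg (sub_nonneg.mpr (div_le_one_of_le₀ hu.2 hρ.le)) k).trans (hlow u ⟨hu0, hu.2⟩)
  have hpointwise : ∀ u ∈ Ioo (0 : ℝ) (2 / n),
      (2 * n / π) ^ p * (11 / 13) ^ k ≤ sinRatio n u ^ p * R u := by
    rintro u ⟨hu0, hu⟩
    have hnu : n * u ≤ 2 := by rw [lt_div_iff₀ hn0] at hu; linarith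
    have huρ : u / ρ ≤ 2 / 13 := by rw [div_le_iff₀ hρ]; nlinarith
    have hker : 2 * n / π ≤ sinRatio n u := two_mul_div_pi_le_sinRatio hu0 hnu (by linarith)
    have hfac : (11 / 13 : ℝ) ^ k ≤ R u :=
      (pow_le_pow_left₀ (by norm_num) (by linarith) k).trans (hlow u ⟨hu0.le, by linarith⟩)
    gcongr
    exact hp.pow_nonneg _
  calc 2 / n * ((2 * n / π) ^ p * (11 / 13) ^ k)
      = ∫ _ in (0 : ℝ)..(2 / n), (2 * n / π) ^ p * (11 / 13) ^ k := by
        rw [intervalIntegral.integral_const, sub_zero, smul_eq_mul]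
    _ ≤ ∫ u in (0 : ℝ)..(2 / n), sinRatio n u ^ p * R u :=
        intervalIntegral.integral_mono_on_of_le_Ioo (by positivity) intervalIntegrable_const
          (hint _ _) hpointwise
    _ ≤ ∫ u in (0 : ℝ)..ρ, sinRatio n u ^ p * R u := by
        rw [← intervalIntegral.integral_add_adjacent_intervals (hint 0 (2 / n)) (hint _ ρ)]
        linarith

lemma abs_sinRatio_pow_mul_le (hρ : 0 < ρ) {u : ℝ} (hu : u ∈ Icc ρ π)
    (hR : |R u| ≤ (1 + u / ρ) ^ k) :
    |sinRatio n u ^ (q + k + 2) * R u| ≤ (π / ρ) ^ q * (2 * π / ρ) ^ k * π ^ 2 * u ^ (-2 : ℤ) := by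
  have hu0 : 0 < u := hρ.trans_le hu.1
  have hgrowth : |R u| ≤ (2 * u / ρ) ^ k := by
    refine hR.trans (pow_le_pow_left₀ (by positivity) ?_ k)
    rw [mul_div_assoc]
    linarith [(one_le_div hρ).mpr hu.1]
  calc |sinRatio n u ^ (q + k + 2) * R u| ≤ (π / u) ^ (q + k + 2) * (2 * u / ρ) ^ k := by
        rw [abs_mul, abs_pow]
        gcongr
        exact abs_sinRatio_le n hu0 hu.2
    _ = (π / u) ^ q * (π / u * (2 * u / ρ)) ^ k * (π / u) ^ 2 := by ring
    _ = (π / u) ^ q * (2 * π / ρ) ^ k * π ^ 2 * u ^ (-2 : ℤ) := by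
        rw [show π / u * (2 * u / ρ) = 2 * π / ρ by field_simp, div_pow π u 2, div_eq_mul_inv,
          zpow_neg, mul_assoc _ (π ^ 2)]
        norm_cast
    _ ≤ (π / ρ) ^ q * (2 * π / ρ) ^ k * π ^ 2 * u ^ (-2 : ℤ) := by
        gcongr
        exact hu.1

lemma abs_integral_sinRatio_pow_mul_far_le (hρ : 0 < ρ) (hρπ : ρ ≤ π)
    (hup : ∀ u ∈ Icc ρ π, |R u| ≤ (1 + u / ρ) ^ k) :
    |∫ u in ρ..π, sinRatio n u ^ (q + k + 2) * R u| ≤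
      (π / ρ) ^ q * (2 * π / ρ) ^ k * (π ^ 2 / ρ) := by
  have hzero : (0 : ℝ) ∉ uIcc ρ π := by
    rw [uIcc_of_le hρπ]
    exact fun h => hρ.not_ge h.1
  calc |∫ u in ρ..π, sinRatio n u ^ (q + k + 2) * R u|
      ≤ ∫ u in ρ..π, (π / ρ) ^ q * (2 * π / ρ) ^ k * π ^ 2 * u ^ (-2 : ℤ) := by
        rw [← norm_eq_abs]
        refine intervalIntegral.norm_integral_le_of_norm_le hρπ (ae_of_all _ fun u hu => ?_)
          ((intervalIntegral.intervalIntegrable_zpow (Or.inr hzero)).const_mul _)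
        have hu' : u ∈ Icc ρ π := Ioc_subset_Icc_self hu
        exact abs_sinRatio_pow_mul_le hρ hu' (hup u hu')
    _ = (π / ρ) ^ q * (2 * π / ρ) ^ k * π ^ 2 * (1 / ρ - 1 / π) := by
        rw [intervalIntegral.integral_const_mul, integral_zpow (Or.inr ⟨by norm_num, hzero⟩),
          show (-2 : ℤ) + 1 = -1 by norm_num, zpow_neg_one, zpow_neg_one]
        push_cast
        ring
    _ ≤ (π / ρ) ^ q * (2 * π / ρ) ^ k * π ^ 2 * (1 / ρ) := by
        gcongr
        linarith [one_div_pos.mpr pi_pos]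
    _ = (π / ρ) ^ q * (2 * π / ρ) ^ k * (π ^ 2 / ρ) := by ring

lemma far_bound_lt_near_bound (hn : 0 < n) (hnρ : 13 ≤ n * ρ) :
    (π / ρ) ^ q * (2 * π / ρ) ^ k * (π ^ 2 / ρ) <
      2 / n * ((2 * n / π) ^ (q + k + 2) * (11 / 13) ^ k) := by
  have hn0 : (0 : ℝ) < n := by exact_mod_cast hn
  have hρ : 0 < ρ := pos_of_mul_pos_right (by linarith) hn0.le
  have hπ : π ^ 2 ≤ 10 := by nlinarith [pi_lt_d2, pi_pos]
  have hfac₁ : π / ρ ≤ 2 * n / π := by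
    rw [div_le_div_iff₀ hρ pi_pos]
    linarith
  have hfac₂ : 2 * π / ρ ≤ 2 * n / π * (11 / 13) := by
    rw [div_mul_eq_mul_div, div_le_div_iff₀ hρ pi_pos]
    linarith
  -- Equivalently `π ^ 4 / 8 < n * ρ`, the strictest of the three: this is where `13` comes from.
  have hfac₃ : π ^ 2 / ρ < 8 * n / π ^ 2 := by
    rw [div_lt_div_iff₀ hρ (by positivity)]
    nlinarith
  calc (π / ρ) ^ q * (2 * π / ρ) ^ k * (π ^ 2 / ρ)
      ≤ (2 * n / π) ^ q * (2 * n / π * (11 / 13)) ^ k * (π ^ 2 / ρ) := by gcongr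
    _ < (2 * n / π) ^ q * (2 * n / π * (11 / 13)) ^ k * (8 * n / π ^ 2) := by gcongr
    _ = 2 / n * ((2 * n / π) ^ (q + k + 2) * (11 / 13) ^ k) := by
        rw [mul_pow, pow_add, pow_add]
        field_simp
        ring

lemma integral_zero_pi_sinRatio_pow_mul_pos (hn : 0 < n) (hnρ : 13 ≤ n * ρ) (hρπ : ρ ≤ π)
    (hp : Even p) (hkp : k + 2 ≤ p) (hR : Continuous R)
    (hlow : ∀ u ∈ Icc 0 ρ, (1 - u / ρ) ^ k ≤ R u)
    (hup : ∀ u ∈ Icc ρ π, |R u| ≤ (1 + u / ρ) ^ k) :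
    0 < ∫ u in (0 : ℝ)..π, sinRatio n u ^ p * R u := by
  obtain ⟨q, rfl⟩ : ∃ q, p = q + k + 2 := ⟨p - k - 2, by omega⟩
  have hρ : 0 < ρ := pos_of_mul_pos_right (by linarith) n.cast_nonneg
  have hnear := le_integral_sinRatio_pow_mul_near hn hnρ hρπ hp hR hlow
  have hfar := neg_le_of_abs_le
    (abs_integral_sinRatio_pow_mul_far_le (n := n) (q := q) hρ hρπ hup)
  have hint (a c : ℝ) :
      IntervalIntegrable (fun u => sinRatio n u ^ (q + k + 2) * R u) volume a c :=
    Continuous.intervalIntegrable (by fun_prop) a c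
  rw [← intervalIntegral.integral_add_adjacent_intervals (hint 0 ρ) (hint ρ π)]
  linarith [far_bound_lt_near_bound (k := k) (q := q) hn hnρ]

lemma integral_sinRatio_pow_mul_pos (hn : 0 < n) (hnρ : 13 ≤ n * ρ) (hρπ : ρ ≤ π)
    (hp : Even p) (hkp : k + 2 ≤ p) (hR : Continuous R)
    (hlow : ∀ u, |u| ≤ ρ → (1 - |u| / ρ) ^ k ≤ R u)
    (hup : ∀ u, |R u| ≤ (1 + |u| / ρ) ^ k) :
    0 < ∫ u in (-π)..π, sinRatio n u ^ p * R u := by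
  have hρ : 0 < ρ := pos_of_mul_pos_right (by linarith) n.cast_nonneg
  have hint (a c : ℝ) : IntervalIntegrable (fun u => sinRatio n u ^ p * R u) volume a c :=
    Continuous.intervalIntegrable (by fun_prop) a c
  have hright : 0 < ∫ u in (0 : ℝ)..π, sinRatio n u ^ p * R u := by
    refine integral_zero_pi_sinRatio_pow_mul_pos hn hnρ hρπ hp hkp hR
      (fun u hu => ?_) fun u hu => ?_
    · simpa only [abs_of_nonneg hu.1] using hlow u (by rw [abs_of_nonneg hu.1]; exact hu.2)
    · simpa only [abs_of_pos (hρ.trans_le hu.1)] using hup u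
  have hleft : 0 < ∫ u in (-π)..0, sinRatio n u ^ p * R u := by
    have hreflect : ∫ u in (0 : ℝ)..π, sinRatio n u ^ p * R (-u) =
        ∫ u in (-π)..0, sinRatio n u ^ p * R u := by
      simpa only [sinRatio_neg, neg_zero] using
        intervalIntegral.integral_comp_neg (a := 0) (b := π) fun u => sinRatio n u ^ p * R u
    rw [← hreflect]
    refine integral_zero_pi_sinRatio_pow_mul_pos hn hnρ hρπ hp hkp (hR.comp continuous_neg)
      (fun u hu => ?_) fun u hu => ?_
    · simpa only [abs_neg, abs_of_nonneg hu.1] using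
        hlow (-u) (by rw [abs_neg, abs_of_nonneg hu.1]; exact hu.2)
    · simpa only [abs_neg, abs_of_pos (hρ.trans_le hu.1)] using hup (-u)
  rw [← intervalIntegral.integral_add_adjacent_intervals (hint (-π) 0) (hint 0 π)]
  exact add_pos hleft hright

end Concentration

section TrigPi

lemma abs_sin_add_div_sin_sub_one_le {a δ : ℝ} (hδ : 0 < δ) (ha : δ ≤ |sin a|) (v : ℝ) :
    |sin (a + v) / sin a - 1| ≤ |v| / δ := by
  have hsin : 0 < |sin a| := hδ.trans_le ha
  rw [div_sub_one (abs_pos.mp hsin), abs_div]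
  have hlip : |sin (a + v) - sin a| ≤ |v| := by
    simpa only [add_sub_cancel_left] using abs_sin_sub_sin_le (a + v) a
  exact div_le_div₀ (abs_nonneg v) hlip hδ ha

lemma pow_card_le_prod_of_abs_sub_one_le {ι : Type*} {t : Finset ι} {f : ι → ℝ} {ε : ℝ}
    (hε : ε ≤ 1) (h : ∀ i ∈ t, |f i - 1| ≤ ε) : (1 - ε) ^ t.card ≤ ∏ i ∈ t, f i := by
  rw [← Finset.prod_const]
  exact Finset.prod_le_prod (fun _ _ => sub_nonneg.mpr hε)
    fun i hi => by linarith [neg_le_of_abs_le (h i hi)]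

lemma abs_prod_le_pow_card_of_abs_sub_one_le {ι : Type*} {t : Finset ι} {f : ι → ℝ} {ε : ℝ}
    (h : ∀ i ∈ t, |f i - 1| ≤ ε) : |∏ i ∈ t, f i| ≤ (1 + ε) ^ t.card := by
  rw [Finset.abs_prod, ← Finset.prod_const]
  refine Finset.prod_le_prod (fun _ _ => abs_nonneg _) fun i hi => ?_
  calc |f i| = |1 + (f i - 1)| := by rw [add_sub_cancel]
    _ ≤ |1| + |f i - 1| := abs_add_le _ _
    _ ≤ 1 + ε := by rw [abs_one]; gcongr; exact h i hi

variable {s n b : ℕ} {y : ℤ → ℝ} {c δ : ℝ}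

@[fun_prop]
lemma continuous_trigPi (s : ℕ) (y : ℤ → ℝ) : Continuous (trigPi s y) := by
  unfold trigPi
  fun_prop

lemma trigPi_periodic (s : ℕ) (y : ℤ → ℝ) : Function.Periodic (trigPi s y) (2 * π) := by
  intro x
  have hflip (i : ℕ) :
      sin ((x + 2 * π - y ((i : ℤ) + 1)) / 2) = -sin ((x - y ((i : ℤ) + 1)) / 2) := by
    rw [← sin_add_pi]
    ring_nf
  simp only [trigPi, hflip, Finset.prod_neg, Finset.card_range, (even_two_mul s).neg_one_pow,
    one_mul]

lemma trigPi_ne_zero (hδ : 0 < δ) (hc : ∀ i, δ ≤ |sin ((c - y i) / 2)|) : trigPi s y c ≠ 0 :=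
  Finset.prod_ne_zero_iff.mpr fun _ _ => abs_pos.mp (hδ.trans_le (hc _))

lemma abs_trigPi_factor_ratio_sub_one_le (hδ : 0 < δ) (hc : ∀ i, δ ≤ |sin ((c - y i) / 2)|)
    (u : ℝ) (i : ℤ) :
    |sin ((c + u - y i) / 2) / sin ((c - y i) / 2) - 1| ≤ |u| / (2 * δ) := by
  convert abs_sin_add_div_sin_sub_one_le hδ (hc i) (u / 2) using 1
  · ring_nf
  · rw [abs_div, abs_two, div_div]

lemma le_trigPi_add_div_trigPi (hδ : 0 < δ) (hc : ∀ i, δ ≤ |sin ((c - y i) / 2)|) {u : ℝ}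
    (hu : |u| ≤ 2 * δ) :
    (1 - |u| / (2 * δ)) ^ (2 * s) ≤ trigPi s y (c + u) / trigPi s y c := by
  simpa only [trigPi, Finset.prod_div_distrib, Finset.card_range] using
    pow_card_le_prod_of_abs_sub_one_le (t := Finset.range (2 * s))
      (div_le_one_of_le₀ hu (by positivity))
      fun i _ => abs_trigPi_factor_ratio_sub_one_le hδ hc u (i + 1)

lemma abs_trigPi_add_div_trigPi_le (hδ : 0 < δ) (hc : ∀ i, δ ≤ |sin ((c - y i) / 2)|) (u : ℝ) :
    |trigPi s y (c + u) / trigPi s y c| ≤ (1 + |u| / (2 * δ)) ^ (2 * s) := by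
  simpa only [trigPi, Finset.prod_div_distrib, Finset.card_range] using
    abs_prod_le_pow_card_of_abs_sub_one_le (t := Finset.range (2 * s))
      fun i _ => abs_trigPi_factor_ratio_sub_one_le hδ hc u (i + 1)

lemma trigPi_add_div_trigPi_pos (hδ : 0 < δ) (hc : ∀ i, δ ≤ |sin ((c - y i) / 2)|) {u : ℝ}
    (hu : |u| < 2 * δ) : 0 < trigPi s y (c + u) / trigPi s y c :=
  (pow_pos (sub_pos.mpr ((div_lt_one (by positivity)).mpr hu)) _).trans_le
    (le_trigPi_add_div_trigPi hδ hc hu.le)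

lemma integral_sinRatio_pow_mul_trigPi_mul_pos (hn : 0 < n) (hb : s + 1 ≤ b)
    (hδ : 13 ≤ n * (2 * δ)) (hc : ∀ i, δ ≤ |sin ((c - y i) / 2)|) (a : ℝ) :
    0 < (∫ u in a..(a + 2 * π), sinRatio n (u - c) ^ (2 * b) * trigPi s y u) * trigPi s y c := by
  have hδ0 : 0 < δ := by
    have := pos_of_mul_pos_right (by linarith : (0 : ℝ) < n * (2 * δ)) n.cast_nonneg
    linarith
  have hδπ : 2 * δ ≤ π := by linarith [(hc 0).trans (abs_sin_le_one _), pi_gt_three]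
  have hne : trigPi s y c ≠ 0 := trigPi_ne_zero hδ0 hc
  have hper : Function.Periodic (fun u => sinRatio n (u - c) ^ (2 * b) * trigPi s y u) (2 * π) := by
    intro u
    simp only [trigPi_periodic s y u, add_sub_right_comm u]
    rw [← (even_two_mul b).pow_abs, abs_sinRatio_add_two_pi, (even_two_mul b).pow_abs]
  have hratio : 0 < ∫ u in (-π)..π,
      sinRatio n u ^ (2 * b) * (trigPi s y (c + u) / trigPi s y c) :=
    integral_sinRatio_pow_mul_pos hn hδ hδπ (even_two_mul b) (by omega : 2 * s + 2 ≤ 2 * b)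
      (by fun_prop) (fun u => le_trigPi_add_div_trigPi hδ0 hc)
      (abs_trigPi_add_div_trigPi_le hδ0 hc)
  have hcentre : ∫ u in a..(a + 2 * π), sinRatio n (u - c) ^ (2 * b) * trigPi s y u =
      (∫ u in (-π)..π, sinRatio n u ^ (2 * b) * (trigPi s y (c + u) / trigPi s y c)) *
        trigPi s y c := by
    rw [hper.intervalIntegral_add_eq a (c + -π), show c + -π + 2 * π = c + π by ring,
      ← intervalIntegral.integral_comp_add_left _ c, ← intervalIntegral.integral_mul_const]
    simp only [add_sub_cancel_left, mul_assoc, div_mul_cancel₀ _ hne]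
  rw [hcentre, mul_assoc]
  exact mul_pos hratio (mul_self_pos.mpr hne)

end TrigPi

section Nodes

lemma div_pi_le_abs_sin_half {d x : ℝ} (h : ∀ k : ℤ, d ≤ |x - 2 * π * k|) :
    d / π ≤ |sin (x / 2)| := by
  set k : ℤ := round (x / (2 * π))
  have hreduced : |x / 2 - k * π| ≤ π / 2 := by
    rw [show x / 2 - k * π = π * (x / (2 * π) - k) by field_simp, abs_mul, abs_of_pos pi_pos]
    linarith [mul_le_mul_of_nonneg_left (abs_sub_round (x / (2 * π))) pi_pos.le]
  calc d / π ≤ |x - 2 * π * k| / π := by gcongr; exact h k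
    _ = 2 / π * |x / 2 - k * π| := by
        rw [show x - 2 * π * k = 2 * (x / 2 - k * π) by ring, abs_mul, abs_two]
        ring
    _ ≤ |sin (x / 2 - k * π)| := mul_abs_le_abs_sin hreduced
    _ = |sin (x / 2)| := by rw [sin_sub_int_mul_pi, abs_mul, abs_neg_one_zpow, one_mul]

lemma map_add_zsmul_period {a : ℤ} {T : ℝ} {y : ℤ → ℝ} (hper : ∀ i, y (i + a) = y i - T)
    (i k : ℤ) : y (i + k • a) = y i - k * T := by
  let f : AddConstMap ℤ ℝ a (-T) := ⟨y, fun i => by rw [hper, sub_eq_add_neg]⟩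
  calc y (i + k • a) = y i + k • -T := AddConstMapClass.map_add_zsmul f i k
    _ = y i - k * T := by rw [zsmul_eq_mul, mul_neg, sub_eq_add_neg]

variable {s n m b : ℕ} {y : ℤ → ℝ} {j : ℤ} {c : ℝ}

lemma xnode_sub_one (n : ℕ) (j : ℤ) : xnode n (j - 1) = xnode n j + π / n := by
  unfold xnode
  push_cast
  ring

lemma mem_Ico_xnode_jIdx (hn : 0 < n) (y : ℤ → ℝ) (i : ℤ) :
    y i ∈ Ico (xnode n (jIdx y n i)) (xnode n (jIdx y n i - 1)) := by
  have hh : 0 < π / n := by positivity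
  have hscale : -(y i) * n / π * (π / n) = -(y i) := by field_simp
  have hceil : -(y i) ≤ jIdx y n i * (π / n) := by
    rw [← hscale]
    exact mul_le_mul_of_nonneg_right (Int.le_ceil _) hh.le
  have hceil_lt : (jIdx y n i : ℝ) * (π / n) < -(y i) + π / n := by
    rw [← hscale, ← add_one_mul]
    exact mul_lt_mul_of_pos_right (Int.ceil_lt_add_one _) hh
  rw [xnode_sub_one, xnode]
  constructor <;> linarith

lemma le_abs_sub_of_memH (hn : 0 < n) (hj : memH y n m j)
    (hc : c ∈ Icc (xnode n j) (xnode n (j - 1))) (i : ℤ) :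
    ((m : ℝ) - 1) * (π / n) ≤ |c - y i| := by
  have hh : 0 < π / n := by positivity
  obtain ⟨hy₁, hy₂⟩ := mem_Ico_xnode_jIdx hn y i
  obtain ⟨hc₁, hc₂⟩ := hc
  rw [xnode_sub_one] at hy₂ hc₂
  have hout : xnode n j ∉ Oint y n m i := fun h => hj (mem_iUnion.mpr ⟨i, h⟩)
  rw [Oint, mem_Ioo, not_and_or, not_lt, not_lt] at hout
  unfold xnode at *
  push_cast at hout
  rw [le_abs]
  rcases hout with hleft | hright
  · right
    linarith
  · left
    linarith

lemma div_le_abs_sin_of_memH (hper : ∀ i : ℤ, y (i + 2 * (s : ℤ)) = y i - 2 * π) (hn : 0 < n)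
    (hj : memH y n m j) (hc : c ∈ Icc (xnode n j) (xnode n (j - 1))) (i : ℤ) :
    ((m : ℝ) - 1) / n ≤ |sin ((c - y i) / 2)| := by
  have hdist (k : ℤ) : ((m : ℝ) - 1) * (π / n) ≤ |c - y i - 2 * π * k| := by
    convert le_abs_sub_of_memH hn hj hc (i + (-k) • (2 * (s : ℤ))) using 2
    rw [map_add_zsmul_period hper]
    push_cast
    ring
  convert div_pi_le_abs_sin_half hdist using 1
  field_simp

end Nodes

section Jker

/-- The kernel `J_j` with its removable singularities filled in. `Jker` takes junk values at those
points and need not be continuous there. -/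
noncomputable def continuousJker (n b : ℕ) (j : ℤ) (x : ℝ) : ℝ :=
  sinRatio n (x - xnode n j) ^ (2 * b) + sinRatio n (x - xnode n (j - 1)) ^ (2 * b)

@[fun_prop]
lemma continuous_continuousJker (n b : ℕ) (j : ℤ) : Continuous (continuousJker n b j) := by
  unfold continuousJker
  fun_prop

lemma continuousJker_nonneg (n b : ℕ) (j : ℤ) (x : ℝ) : 0 ≤ continuousJker n b j x :=
  add_nonneg ((even_two_mul b).pow_nonneg _) ((even_two_mul b).pow_nonneg _)

lemma ae_sin_half_sub_ne_zero (c : ℝ) : ∀ᵐ u : ℝ, sin ((u - c) / 2) ≠ 0 := by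
  have hcount : {u : ℝ | sin ((u - c) / 2) = 0}.Countable := by
    refine (countable_range fun k : ℤ => c + 2 * (k * π)).mono fun u hu => ?_
    obtain ⟨k, hk⟩ := sin_eq_zero_iff.mp hu
    exact ⟨k, by simp only [hk]; ring⟩
  exact hcount.ae_notMem volume

lemma Jker_ae_eq_continuousJker (n b : ℕ) (j : ℤ) : Jker n b j =ᵐ[volume] continuousJker n b j := by
  filter_upwards [ae_sin_half_sub_ne_zero (xnode n j), ae_sin_half_sub_ne_zero (xnode n (j - 1))]
    with u h₁ h₂
  rw [Jker, continuousJker, sinRatio_eq_div n h₁, sinRatio_eq_div n h₂]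

lemma integral_Jker_mul_eq (n b : ℕ) (j : ℤ) (f : ℝ → ℝ) (a c : ℝ) :
    ∫ u in a..c, Jker n b j u * f u = ∫ u in a..c, continuousJker n b j u * f u := by
  refine intervalIntegral.integral_congr_ae ?_
  filter_upwards [Jker_ae_eq_continuousJker n b j] with u hu _
  rw [hu]

lemma hasDerivAt_tfun (s : ℕ) (y : ℤ → ℝ) (n b : ℕ) (j : ℤ) (x : ℝ) :
    HasDerivAt (tfun s y n b j)
      (continuousJker n b j x * trigPi s y x /
        ∫ u in (xnode n j - π)..(xnode n j + π), Jker n b j u * trigPi s y u) x := by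
  unfold tfun
  simp only [integral_Jker_mul_eq]
  have hcont : Continuous fun u => continuousJker n b j u * trigPi s y u := by fun_prop
  exact (hcont.integral_hasStrictDerivAt _ x).hasDerivAt.div_const _

variable {s n m b : ℕ} {y : ℤ → ℝ} {j : ℤ}

lemma integral_Jker_mul_trigPi_mul_pos (hper : ∀ i : ℤ, y (i + 2 * (s : ℤ)) = y i - 2 * π)
    (hn : 0 < n) (hb : s + 1 ≤ b) (hm : 8 ≤ m) (hj : memH y n m j) :
    0 < (∫ u in (xnode n j - π)..(xnode n j + π), Jker n b j u * trigPi s y u) *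
      trigPi s y (xnode n j) := by
  have hn0 : (0 : ℝ) < n := by exact_mod_cast hn
  have hm8 : (8 : ℝ) ≤ m := by exact_mod_cast hm
  have hcell : xnode n j ≤ xnode n (j - 1) := by
    rw [xnode_sub_one]
    linarith [div_pos pi_pos hn0]
  set δ : ℝ := ((m : ℝ) - 1) / n with hδ_def
  have hδ : 0 < δ := div_pos (by linarith) hn0
  have hnδ : 13 ≤ n * (2 * δ) := by
    rw [show n * (2 * δ) = 2 * ((m : ℝ) - 1) by rw [hδ_def]; field_simp]
    linarith
  have hsep₁ := div_le_abs_sin_of_memH hper hn hj (left_mem_Icc.mpr hcell)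
  have hsep₂ := div_le_abs_sin_of_memH hper hn hj (right_mem_Icc.mpr hcell)
  have hpeak₁ := integral_sinRatio_pow_mul_trigPi_mul_pos hn hb hnδ hsep₁ (xnode n j - π)
  have hpeak₂ := integral_sinRatio_pow_mul_trigPi_mul_pos hn hb hnδ hsep₂ (xnode n j - π)
  have hsame : 0 < trigPi s y (xnode n (j - 1)) / trigPi s y (xnode n j) := by
    rw [xnode_sub_one]
    refine trigPi_add_div_trigPi_pos hδ hsep₁ ?_
    rw [abs_of_pos (by positivity), div_lt_iff₀ hn0]
    linarith [pi_lt_four]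
  have hpeak₂' := div_pos hpeak₂ hsame
  rw [mul_div_assoc, div_div_cancel₀ (trigPi_ne_zero hδ hsep₂)] at hpeak₂'
  have hint (c : ℝ) : IntervalIntegrable (fun u => sinRatio n (u - c) ^ (2 * b) * trigPi s y u)
      volume (xnode n j - π) (xnode n j - π + 2 * π) :=
    Continuous.intervalIntegrable (by fun_prop) _ _
  rw [integral_Jker_mul_eq, show xnode n j + π = xnode n j - π + 2 * π by ring]
  simp only [continuousJker, add_mul]
  rw [intervalIntegral.integral_add (hint _) (hint _), add_mul]
  exact add_pos hpeak₁ hpeak₂'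

theorem stmt2_tj_deriv_sign_general (hper : ∀ i : ℤ, y (i + 2 * (s : ℤ)) = y i - 2 * π)
    (hn : 0 < n) (hb : s + 1 ≤ b) (hm : 8 ≤ m) (hj : memH y n m j) :
    Differentiable ℝ (tfun s y n b j) ∧
      ∀ x : ℝ, 0 ≤ deriv (tfun s y n b j) x * trigPi s y x * trigPi s y (xnode n j) := by
  refine ⟨fun x => (hasDerivAt_tfun s y n b j x).differentiableAt, fun x => ?_⟩
  rw [(hasDerivAt_tfun s y n b j x).deriv]
  have hD := integral_Jker_mul_trigPi_mul_pos hper hn hb hm hj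
  set D := ∫ u in (xnode n j - π)..(xnode n j + π), Jker n b j u * trigPi s y u
  have hquot : 0 < trigPi s y (xnode n j) / D := by
    simpa only [div_pos_iff, mul_pos_iff, and_comm] using hD
  calc 0 ≤ continuousJker n b j x * trigPi s y x ^ 2 * (trigPi s y (xnode n j) / D) :=
        mul_nonneg (mul_nonneg (continuousJker_nonneg n b j x) (sq_nonneg _)) hquot.le
    _ = continuousJker n b j x * trigPi s y x / D * trigPi s y x * trigPi s y (xnode n j) := by ring

end Jker

theorem stmt2_tj_deriv_sign
    (s : ℕ) (hs : 0 < s) (y : ℤ → ℝ)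
    (hper : ∀ i : ℤ, y (i + 2 * (s : ℤ)) = y i - 2 * Real.pi)
    (hmono : ∀ i : ℤ, 1 ≤ i → i < 2 * (s : ℤ) → y (i + 1) < y i)
    (hlow : -Real.pi ≤ y (2 * (s : ℤ))) (hhigh : y 1 < Real.pi)
    (N : ℕ) (hN : ∀ n : ℕ, N ≤ n → ∀ i : ℤ, 1 ≤ i → i ≤ 2 * (s : ℤ) →
      Oint y n 30 i ∩ Oint y n 30 (i - 1) = ∅)
    (n : ℕ) (hn : N ≤ n) (hn0 : 0 < n)
    (b : ℕ) (hb : s + 2 ≤ b)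
    (j : ℤ) (hj : memH y n 10 j) (hjn : |j| ≤ (n : ℤ)) :
    Differentiable ℝ (tfun s y n b j) ∧
      ∀ x : ℝ, 0 ≤ deriv (tfun s y n b j) x * trigPi s y x * trigPi s y (xnode n j) :=
  stmt2_tj_deriv_sign_general hper hn0 (by omega) (by norm_num) hj
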